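/- Let n, k ≥ 1 and z ∈ ℂ, and let x = (x_1,…,x_k) ∈ ℂ^k have nonzero, pairwise distinct entries. Then x satisfies the Bethe Ansatz equations x_i^{n+k} = (−1)^{k−1} z·(x_1⋯x_k) for all i = 1,…,k if and only if h_{n+1}(x) = h_{n+2}(x) = ⋯ = h_{n+k−1}(x) = 0, h_{n+k}(x) + (−1)^k z·e_k(x) = 0, and h_n(x) = z. -/

import Mathlib

noncomputable section

open scoped BigOperators

/-- Elementary symmetric polynomial `e_r(x)` of a tuple of complex numbers,
with `e_0 = 1` and `e_r = 0` for `r < 0` or `r > m`. -/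
def eC {m : ℕ} (x : Fin m → ℂ) (r : ℤ) : ℂ :=
  if 0 ≤ r then ∑ I ∈ Finset.powersetCard r.toNat (Finset.univ : Finset (Fin m)), ∏ i ∈ I, x i
  else 0

/-- Complete homogeneous symmetric polynomial `h_r(x)` of a tuple of complex numbers,
with `h_0 = 1` and `h_r = 0` for `r < 0`. -/
def hC {m : ℕ} (x : Fin m → ℂ) (r : ℤ) : ℂ :=
  if 0 ≤ r then
    ∑ p ∈ (Fintype.piFinset fun _ : Fin m => Finset.range (r.toNat + 1)).filter
        (fun p => ∑ i, p i = r.toNat),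
      ∏ i, x i ^ p i
  else 0

def bW {k : ℕ} (x : Fin k → ℂ) (i : Fin k) : ℂ :=
  (Lagrange.basis Finset.univ (fun j => (x j)⁻¹) i).eval 0

theorem inv_inj_aux {k : ℕ} (x : Fin k → ℂ) (hxd : Function.Injective x) :
    Function.Injective (fun j => (x j)⁻¹) := fun a b h => hxd (inv_injective h)

theorem basis_aux {k : ℕ} (x : Fin k → ℂ) (hx0 : ∀ i, x i ≠ 0) (i : Fin k) :
    Lagrange.basis Finset.univ (fun j => (x j)⁻¹) i =
      Polynomial.C (bW x i) *
        ∏ j ∈ Finset.univ.erase i, (1 - Polynomial.C (x j) * Polynomial.X) := by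
  unfold bW Lagrange.basis
  rw [Polynomial.eval_prod, map_prod, ← Finset.prod_mul_distrib]
  refine Finset.prod_congr rfl fun j _ => ?_
  simp only [Lagrange.basisDivisor, Polynomial.eval_mul, Polynomial.eval_C, Polynomial.eval_sub,
    Polynomial.eval_X, map_mul, zero_sub, map_neg]
  have h : (Polynomial.C (x j)⁻¹ : Polynomial ℂ) * Polynomial.C (x j) = 1 := by
    rw [← Polynomial.C_mul, inv_mul_cancel₀ (hx0 j), Polynomial.C_1]
  linear_combination (-Polynomial.C ((x i)⁻¹ - (x j)⁻¹)⁻¹ * Polynomial.X) * h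

theorem bW_ne {k : ℕ} (x : Fin k → ℂ) (hx0 : ∀ i, x i ≠ 0) (hxd : Function.Injective x)
    (i : Fin k) : bW x i ≠ 0 := by
  intro h
  have h1 := Lagrange.eval_basis_self (s := Finset.univ) (i := i)
    ((inv_inj_aux x hxd).injOn) (Finset.mem_univ i)
  rw [basis_aux x hx0, h] at h1
  simp at h1

theorem interp_aux {k : ℕ} (x : Fin k → ℂ) (hxd : Function.Injective x) (f : Polynomial ℂ)
    (hf : f.degree < (k : ℕ)) :
    ∑ i, bW x i * f.eval ((x i)⁻¹) = f.eval 0 := by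
  have h := Lagrange.eq_interpolate (s := Finset.univ) (f := f)
    ((inv_inj_aux x hxd).injOn) (by simpa using hf)
  conv_rhs => rw [h]
  rw [Lagrange.interpolate_apply, Polynomial.eval_finsetSum]
  simp [bW, mul_comm]

theorem moment_lt {k : ℕ} (x : Fin k → ℂ) (hxd : Function.Injective x) (m : ℕ) (hm : m < k) :
    ∑ i, bW x i * (x i)⁻¹ ^ m = if m = 0 then 1 else 0 := by
  have h := interp_aux x hxd (Polynomial.X ^ m) (by simpa using hm)
  simpa [zero_pow_eq] using h

theorem moment_k {k : ℕ} (hk : 1 ≤ k) (x : Fin k → ℂ) (hxd : Function.Injective x) :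
    ∑ i, bW x i * (x i)⁻¹ ^ k = (-1) ^ (k - 1) * (∏ i, x i)⁻¹ := by
  have hmon : (Lagrange.nodal Finset.univ (fun j => (x j)⁻¹)).degree = (k : ℕ) := by
    simp [Lagrange.degree_nodal]
  have h := interp_aux x hxd (Polynomial.X ^ k - Lagrange.nodal Finset.univ (fun j => (x j)⁻¹)) (by
    have := Polynomial.degree_sub_lt (p := Polynomial.X ^ k)
      (q := Lagrange.nodal Finset.univ (fun j => (x j)⁻¹)) (by simp [hmon]) (by simp)
      (by simp [(Lagrange.nodal_monic).leadingCoeff])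
    simpa using this)
  have h0 : ∀ i, (Lagrange.nodal Finset.univ (fun j => (x j)⁻¹)).eval ((x i)⁻¹) = 0 := fun i =>
    Lagrange.eval_nodal_at_node (v := fun j => (x j)⁻¹) (Finset.mem_univ i)
  simp only [Polynomial.eval_sub, Polynomial.eval_pow, Polynomial.eval_X, h0, sub_zero] at h
  rw [h, Lagrange.eval_nodal]
  obtain ⟨l, rfl⟩ : ∃ l, k = l + 1 := ⟨k - 1, by omega⟩
  simp only [zero_sub, Finset.prod_neg, Finset.prod_inv_distrib]
  simp [pow_succ]

theorem hC_coeff {k : ℕ} (x : Fin k → ℂ) (r : ℕ) :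
    hC x (r : ℤ) = PowerSeries.coeff r (∏ i, PowerSeries.mk (fun m => x i ^ m)) := by
  classical
  rw [PowerSeries.coeff_prod]
  simp only [hC, PowerSeries.coeff_mk, Int.toNat_natCast, Nat.cast_nonneg, if_true]
  refine Finset.sum_bij' (fun p _ => Finsupp.equivFunOnFinite.symm p) (fun l _ => (l : Fin k → ℕ))
    ?_ ?_ ?_ ?_ ?_
  · intro p hp
    simp only [Finset.mem_filter] at hp
    simp [Finset.mem_finsuppAntidiag, hp.2]
  · intro l hl
    simp only [Finset.mem_finsuppAntidiag] at hl
    simp only [Finset.mem_filter, Fintype.mem_piFinset, Finset.mem_range]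
    refine ⟨fun i => ?_, hl.1⟩
    have := Finset.single_le_sum (f := fun i => l i) (fun i _ => Nat.zero_le _) (Finset.mem_univ i)
    have h2 : ∑ i, l i = r := hl.1
    omega
  · intro p _
    rfl
  · intro l _
    ext i
    rfl
  · intro p _
    rfl

theorem geom_aux (a : ℂ) :
    PowerSeries.mk (fun m => a ^ m) * (1 - PowerSeries.C a * PowerSeries.X) = 1 := by
  rw [mul_comm]
  ext m
  cases m with
  | zero => simp
  | succ m =>
    rw [sub_mul, one_mul, mul_assoc, map_sub, PowerSeries.coeff_C_mul,
      PowerSeries.coeff_succ_X_mul]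
    simp [pow_succ, PowerSeries.coeff_one, mul_comm]

theorem hC_sum {k : ℕ} (hk : 1 ≤ k) (x : Fin k → ℂ) (hx0 : ∀ i, x i ≠ 0)
    (hxd : Function.Injective x) (r : ℕ) :
    hC x (r : ℤ) = ∑ i, bW x i * x i ^ r := by
  have hQ : (∏ i, PowerSeries.mk (fun m => x i ^ m)) *
      (∏ i, (1 - PowerSeries.C (x i) * PowerSeries.X)) = 1 := by
    rw [← Finset.prod_mul_distrib]
    exact Finset.prod_eq_one fun i _ => geom_aux (x i)
  have hpoly : ∑ i, Polynomial.C (bW x i) *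
        ∏ j ∈ Finset.univ.erase i, (1 - Polynomial.C (x j) * Polynomial.X) = 1 := by
    refine Eq.trans ?_ (Lagrange.sum_basis (s := Finset.univ) ((inv_inj_aux x hxd).injOn)
      ⟨⟨0, hk⟩, Finset.mem_univ _⟩)
    exact Finset.sum_congr rfl fun i _ => (basis_aux x hx0 i).symm
  have hps : ∑ i, PowerSeries.C (bW x i) *
        ∏ j ∈ Finset.univ.erase i, (1 - PowerSeries.C (x j) * PowerSeries.X) = 1 := by
    have := congrArg (Polynomial.coeToPowerSeries.ringHom (R := ℂ)) hpoly
    simp only [map_sum, map_prod, map_mul, map_sub, map_one,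
      Polynomial.coeToPowerSeries.ringHom_apply, Polynomial.coe_C, Polynomial.coe_X] at this
    exact this
  have hS : (∑ i, PowerSeries.C (bW x i) * PowerSeries.mk (fun m => x i ^ m)) *
      (∏ i, (1 - PowerSeries.C (x i) * PowerSeries.X)) = 1 := by
    refine Eq.trans ?_ hps
    rw [Finset.sum_mul]
    refine Finset.sum_congr rfl fun i _ => ?_
    rw [← Finset.mul_prod_erase _ _ (Finset.mem_univ i)]
    linear_combination (PowerSeries.C (bW x i) *
      ∏ j ∈ Finset.univ.erase i, (1 - PowerSeries.C (x j) * PowerSeries.X)) * geom_aux (x i)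
  have hne : (∏ i, (1 - PowerSeries.C (x i) * PowerSeries.X)) ≠ 0 := right_ne_zero_of_mul_eq_one hQ
  rw [hC_coeff, mul_right_cancel₀ hne (hQ.trans hS.symm)]
  simp [map_sum, PowerSeries.coeff_C_mul]

theorem eC_top {k : ℕ} (x : Fin k → ℂ) : eC x (k : ℤ) = ∏ i, x i := by
  have : Finset.powersetCard k (Finset.univ : Finset (Fin k)) = {Finset.univ} := by
    have h := Finset.powersetCard_self (Finset.univ : Finset (Fin k))
    rwa [Finset.card_univ, Fintype.card_fin] at h
  simp [eC, this]

/-- For nonzero, pairwise distinct complex numbers `x_1, …, x_k`, the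
Bethe Ansatz equations `x_i^{n+k} = (-1)^{k-1} z e_k(x)` hold for all `i` if and only if
`h_{n+1}(x) = ⋯ = h_{n+k-1}(x) = 0`, `h_{n+k}(x) + (-1)^k z e_k(x) = 0` and `h_n(x) = z`. -/
theorem bethe_iff_hsymm_relations (n k : ℕ) (hn : 1 ≤ n) (hk : 1 ≤ k) (z : ℂ)
    (x : Fin k → ℂ) (hx0 : ∀ i, x i ≠ 0) (hxd : Function.Injective x) :
    (∀ i, x i ^ (n + k) = (-1) ^ (k - 1) * z * ∏ j, x j) ↔
      ((∀ j : ℕ, 1 ≤ j → j ≤ k - 1 → hC x ((n : ℤ) + (j : ℤ)) = 0) ∧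
        hC x ((n : ℤ) + (k : ℤ)) + (-1) ^ k * z * eC x (k : ℤ) = 0 ∧
        hC x (n : ℤ) = z) := by
  have hP : (∏ j, x j) ≠ 0 := Finset.prod_ne_zero_iff.mpr fun i _ => hx0 i
  have hsign : (-1 : ℂ) ^ k = -(-1) ^ (k - 1) := by
    obtain ⟨l, rfl⟩ : ∃ l, k = l + 1 := ⟨k - 1, by omega⟩
    simp [pow_succ]
  have hh : ∀ j ≤ k, hC x ((n : ℤ) + (j : ℤ)) =
      ∑ i, bW x i * x i ^ (n + k) * (x i)⁻¹ ^ (k - j) := by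
    intro j hj
    rw [← Nat.cast_add, hC_sum hk x hx0 hxd]
    refine Finset.sum_congr rfl fun i _ => ?_
    have : n + k = (n + j) + (k - j) := by omega
    rw [this, pow_add (x i) (n + j), inv_pow, mul_assoc, mul_assoc,
      mul_inv_cancel₀ (pow_ne_zero _ (hx0 i)), mul_one]
  rw [eC_top, hsign]
  set c := (-1) ^ (k - 1) * z * ∏ j, x j with hc
  constructor
  · intro H
    have hh2 : ∀ j ≤ k, hC x ((n : ℤ) + (j : ℤ)) = c * ∑ i, bW x i * (x i)⁻¹ ^ (k - j) := by
      intro j hj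
      rw [hh j hj, Finset.mul_sum]
      refine Finset.sum_congr rfl fun i _ => ?_
      rw [H i]; ring
    refine ⟨fun j h1 h2 => ?_, ?_, ?_⟩
    · rw [hh2 j (by omega), moment_lt x hxd _ (by omega), if_neg (by omega), mul_zero]
    · rw [hh2 k le_rfl, moment_lt x hxd _ (by omega), if_pos (by omega), hc]
      ring
    · have h := hh2 0 (by omega)
      rw [Nat.sub_zero, moment_k hk x hxd, Nat.cast_zero, add_zero] at h
      rw [h, hc]
      have h1 : ((-1 : ℂ) ^ (k - 1)) * (-1) ^ (k - 1) = 1 := by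
        rw [← mul_pow]; simp
      have h2 := mul_inv_cancel₀ hP
      linear_combination (z * (∏ j, x j) * (∏ j, x j)⁻¹) * h1 + z * h2
  · rintro ⟨H1, H2, -⟩
    have hv : (fun i => bW x i * (x i ^ (n + k) - c)) = 0 := by
      refine Matrix.eq_zero_of_forall_pow_sum_mul_pow_eq_zero (inv_inj_aux x hxd) fun m => ?_
      have hm := m.2
      have e : ∑ i, bW x i * (x i ^ (n + k) - c) * (x i)⁻¹ ^ (m : ℕ) =
          hC x ((n : ℤ) + ((k - m : ℕ) : ℤ)) - c * ∑ i, bW x i * (x i)⁻¹ ^ (m : ℕ) := by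
        rw [hh (k - m) (by omega), Finset.mul_sum, ← Finset.sum_sub_distrib]
        refine Finset.sum_congr rfl fun i _ => ?_
        rw [show k - (k - (m : ℕ)) = m by omega]
        ring
      rw [e, moment_lt x hxd _ hm]
      by_cases h0 : (m : ℕ) = 0
      · rw [if_pos h0, h0, Nat.sub_zero]
        linear_combination H2
      · rw [if_neg h0, H1 _ (by omega) (by omega)]
        ring
    intro i
    have := congrFun hv i
    simp only [Pi.zero_apply, mul_eq_zero, bW_ne x hx0 hxd i, false_or] at this
    exact sub_eq_zero.mp this
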